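/- For every positive integer ℓ, s(4, 6ℓ, 2) = 4ℓ and s(4, 6ℓ − 1, 2) = 4ℓ. -/

import Mathlib

open scoped Classical

/-- A placement delivery array with parameters `(F, K, Z)` over alphabet `S`:
an `F × K` array of cells that are either empty (`none`) or an element of `S`,
such that each column has exactly `Z` empty cells, no element occurs twice in a
row or in a column, and two equal entries in positions `(j₁,k₁)`, `(j₂,k₂)`
force the cells `(j₁,k₂)` and `(j₂,k₁)` to be empty. -/
def IsPDA {S : Type} (F K Z : ℕ) (A : Fin F → Fin K → Option S) : Prop :=
  (∀ k : Fin K, (Finset.univ.filter fun j : Fin F => A j k = none).card = Z) ∧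
  (∀ (j : Fin F) (k₁ k₂ : Fin K) (t : S), A j k₁ = some t → A j k₂ = some t → k₁ = k₂) ∧
  (∀ (j₁ j₂ : Fin F) (k : Fin K) (t : S), A j₁ k = some t → A j₂ k = some t → j₁ = j₂) ∧
  (∀ (j₁ j₂ : Fin F) (k₁ k₂ : Fin K) (t : S), j₁ ≠ j₂ → k₁ ≠ k₂ →
      A j₁ k₁ = some t → A j₂ k₂ = some t → A j₁ k₂ = none ∧ A j₂ k₁ = none)

/-- `sPDA F K Z` is the minimum size of an alphabet `S` for which an `S`-PDA with
parameters `(F, K, Z)` exists. -/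
noncomputable def sPDA (F K Z : ℕ) : ℕ :=
  sInf {n : ℕ | ∃ A : Fin F → Fin K → Option (Fin n), IsPDA F K Z A}


/-- Base array: column with nonempty rows `a, b` carries `b` in row `a` and `a` in row `b`. -/
def baseArr : Fin 4 → Fin 6 → Option (Fin 4) :=
  ![![some 1, some 2, some 3, none, none, none],
    ![some 0, none, none, some 2, some 3, none],
    ![none, some 0, none, some 1, none, some 3],
    ![none, none, some 0, none, some 1, some 2]]

theorem base_col : ∀ k : Fin 6, ∃ a b : Fin 4, a ≠ b ∧
    ∀ j, baseArr j k = none ↔ (j = a ∨ j = b) := by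
  unfold baseArr; decide

theorem base_row : ∀ (j : Fin 4) (k₁ k₂ : Fin 6) (t : Fin 4),
    baseArr j k₁ = some t → baseArr j k₂ = some t → k₁ = k₂ := by
  unfold baseArr; decide

theorem base_column : ∀ (j₁ j₂ : Fin 4) (k : Fin 6) (t : Fin 4),
    baseArr j₁ k = some t → baseArr j₂ k = some t → j₁ = j₂ := by
  unfold baseArr; decide

set_option maxRecDepth 100000 in
theorem base_cross : ∀ (j₁ j₂ : Fin 4) (k₁ k₂ : Fin 6), j₁ ≠ j₂ →
    baseArr j₁ k₁ ≠ none → baseArr j₁ k₁ = baseArr j₂ k₂ →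
    baseArr j₁ k₂ = none ∧ baseArr j₂ k₁ = none := by
  unfold baseArr; decide

theorem pda_exists (ℓ K : ℕ) (hK : K ≤ 6 * ℓ) :
    ∃ A : Fin 4 → Fin K → Option (Fin (4 * ℓ)), IsPDA 4 K 2 A := by
  let c : Fin K → Fin 6 := fun k => ⟨k.1 % 6, by omega⟩
  let A : Fin 4 → Fin K → Option (Fin (4 * ℓ)) := fun j k =>
    (baseArr j (c k)).map fun s => ⟨4 * (k.1 / 6) + s.1, by have := k.2; have := s.2; omega⟩
  have hnone : ∀ j k, A j k = none ↔ baseArr j (c k) = none := by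
    intro j k; simp [A]
  have hsome : ∀ j k t, A j k = some t →
      ∃ s : Fin 4, baseArr j (c k) = some s ∧ t.1 = 4 * (k.1 / 6) + s.1 := by
    intro j k t h
    simp only [A, Option.map_eq_some_iff] at h
    obtain ⟨s, hs, rfl⟩ := h
    exact ⟨s, hs, rfl⟩
  refine ⟨A, ?_, ?_, ?_, ?_⟩
  · intro k
    obtain ⟨a, b, hab, h⟩ := base_col (c k)
    rw [← Finset.card_pair hab]
    congr 1
    ext j
    simp [hnone, h]
  · intro j k₁ k₂ t h₁ h₂
    obtain ⟨s₁, hs₁, e₁⟩ := hsome _ _ _ h₁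
    obtain ⟨s₂, hs₂, e₂⟩ := hsome _ _ _ h₂
    have hs : s₁ = s₂ := by ext; omega
    subst hs
    have := congrArg Fin.val (base_row _ _ _ _ hs₁ hs₂)
    simp only [c] at this
    ext; omega
  · intro j₁ j₂ k t h₁ h₂
    obtain ⟨s₁, hs₁, e₁⟩ := hsome _ _ _ h₁
    obtain ⟨s₂, hs₂, e₂⟩ := hsome _ _ _ h₂
    have hs : s₁ = s₂ := by ext; omega
    subst hs
    exact base_column _ _ _ _ hs₁ hs₂
  · intro j₁ j₂ k₁ k₂ t hj _ h₁ h₂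
    obtain ⟨s₁, hs₁, e₁⟩ := hsome _ _ _ h₁
    obtain ⟨s₂, hs₂, e₂⟩ := hsome _ _ _ h₂
    have hs : s₁ = s₂ := by ext; omega
    subst hs
    rw [hnone, hnone]
    exact base_cross _ _ _ _ hj (by simp [hs₁]) (hs₁.trans hs₂.symm)

theorem pda_lower {K n : ℕ} (A : Fin 4 → Fin K → Option (Fin n)) (h : IsPDA 4 K 2 A) :
    2 * K ≤ 3 * n := by
  obtain ⟨hZ, hrow, hcol, hx⟩ := h
  let C : Finset (Fin 4 × Fin K) := Finset.univ.filter fun p => A p.1 p.2 ≠ none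
  have hC : C.card = 2 * K := by
    rw [Finset.card_eq_sum_card_fiberwise (f := Prod.snd) (t := Finset.univ) (by simp)]
    rw [Finset.sum_congr rfl (g := fun _ => 2)]
    · simp [mul_comm]
    · intro k _
      have h1 := Finset.card_filter_add_card_filter_not (s := (Finset.univ : Finset (Fin 4)))
        (fun j => A j k = none)
      have h2 : (C.filter fun p => p.2 = k).card
          = (Finset.univ.filter fun j : Fin 4 => ¬ A j k = none).card := by
        apply Finset.card_bij (fun p _ => p.1)
        · rintro ⟨a, b⟩ hp
          simp only [C, Finset.mem_filter, Finset.mem_univ, true_and] at hp ⊢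
          obtain ⟨hp, rfl⟩ := hp
          exact hp
        · rintro ⟨a, b⟩ hp ⟨a', b'⟩ hp' e
          simp only [Finset.mem_filter] at hp hp' e
          rw [e, hp.2, hp'.2]
        · intro j hj
          refine ⟨(j, k), ?_, rfl⟩
          simpa [C] using hj
      have h3 := hZ k
      simp only [Finset.card_univ, Fintype.card_fin] at h1
      rw [h2]
      omega
  have hle := Finset.card_le_mul_card_image_of_maps_to (s := C)
    (f := fun p => A p.1 p.2) (t := Finset.univ.image some) (by
      rintro ⟨j, k⟩ hp
      simp only [C, Finset.mem_filter, Finset.mem_univ, true_and] at hp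
      obtain ⟨t, ht⟩ := Option.ne_none_iff_exists'.1 hp
      simp [ht]) 3 (by
      intro o ho
      obtain ⟨t, -, rfl⟩ := Finset.mem_image.1 ho
      rcases Finset.eq_empty_or_nonempty (C.filter fun p => A p.1 p.2 = some t) with he | ⟨⟨j₀, k₀⟩, h₀⟩
      · rw [he]; simp
      · have h0 : A j₀ k₀ = some t := (Finset.mem_filter.1 h₀).2
        have : ((C.filter fun p => A p.1 p.2 = some t).erase (j₀, k₀)).card
            ≤ (Finset.univ.filter fun j : Fin 4 => A j k₀ = none).card := by
          apply Finset.card_le_card_of_injOn Prod.fst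
          · rintro ⟨j, k⟩ hp
            simp only [Finset.coe_erase, Set.mem_sdiff, Finset.mem_coe, Finset.mem_filter,
              Set.mem_singleton_iff] at hp
            obtain ⟨⟨_, hp⟩, hne⟩ := hp
            have hj : j ≠ j₀ := by
              rintro rfl
              exact hne (by rw [hrow _ _ _ _ hp h0])
            have hk : k ≠ k₀ := by
              rintro rfl
              exact hj (hcol _ _ _ _ hp h0)
            simpa using (hx _ _ _ _ _ hj hk hp h0).1
          · rintro ⟨j, k⟩ hp ⟨j', k'⟩ hp' e
            have a := (Finset.mem_filter.1 (Finset.mem_of_mem_erase hp)).2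
            have b := (Finset.mem_filter.1 (Finset.mem_of_mem_erase hp')).2
            simp only at a b e
            subst e
            rw [hrow _ _ _ _ a b]
        rw [Finset.card_erase_of_mem h₀, hZ] at this
        omega)
  rw [hC, Finset.card_image_of_injective _ (Option.some_injective _)] at hle
  simpa using hle

theorem sPDA_eq (ℓ K : ℕ) (hK : K ≤ 6 * ℓ) (hK' : 6 * ℓ ≤ K + 1) : sPDA 4 K 2 = 4 * ℓ := by
  unfold sPDA
  apply le_antisymm
  · exact Nat.sInf_le (pda_exists ℓ K hK)
  · refine le_csInf ⟨4 * ℓ, pda_exists ℓ K hK⟩ ?_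
    rintro n ⟨A, hA⟩
    have := pda_lower A hA
    omega

theorem stmt_11 (ℓ : ℕ) (hℓ : 1 ≤ ℓ) :
    sPDA 4 (6 * ℓ) 2 = 4 * ℓ ∧ sPDA 4 (6 * ℓ - 1) 2 = 4 * ℓ := by
  exact ⟨sPDA_eq ℓ _ (by omega) (by omega), sPDA_eq ℓ _ (by omega) (by omega)⟩
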